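/- Fix a real α with 1 < α < 3/2. For even integers n ≥ 4, define λ_k(α,n) = 2 ∑_{j=1}^{n−1} j^{−α} cos(2πkj/n), λ̃_k(α,n) = (λ_k(α,n) − λ_{n/2}(α,n)) / (λ_0(α,n) − λ_{n/2}(α,n)), S_q(α,n) = (1/n) ∑_{k=1}^{n−1} (1 − λ̃_k(α,n))^{−q}, and the asymptotic fidelity F(α,n) = S_1(α,n)^2 / S_2(α,n). Then F(α,n) converges as even n → ∞ to a finite strictly positive limit F_∞(α) > 0. -/

import Mathlib

/-- Eigenvalues of the long-range circulant Hamiltonian. -/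
noncomputable def lam (α : ℝ) (n k : ℕ) : ℝ :=
  2 * ∑ j ∈ Finset.Icc 1 (n - 1), (j : ℝ) ^ (-α) * Real.cos (2 * Real.pi * k * j / n)

/-- Rescaled eigenvalues `λ̃_k = (λ_k - λ_{n/2})/(λ_0 - λ_{n/2})` for even `n`. -/
noncomputable def lamT (α : ℝ) (n k : ℕ) : ℝ :=
  (lam α n k - lam α n (n / 2)) / (lam α n 0 - lam α n (n / 2))

/-- `S_q(α,n) = (1/n) ∑_{k=1}^{n-1} (1 - λ̃_k)^{-q}`. -/
noncomputable def Sq (q : ℕ) (α : ℝ) (n : ℕ) : ℝ :=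
  (1 / (n : ℝ)) * ∑ k ∈ Finset.Icc 1 (n - 1), (1 - lamT α n k) ^ (-(q : ℤ))

/-!
The normalisation of the rescaled eigenvalues cancels in `S_1² / S_2`: up to a common factor, `S_q`
is the average of `(λ_0 - λ_k)^{-q}` over `0 < k < n`. Writing `λ_0 - λ_k` as a truncation, at the
point `x = k / n`, of the series `g x = 2 ∑ j ^ (-α) (1 - cos (2 π x j))`, this average is a Riemann
sum for `∫₀¹ g ^ (-q)`. Already the terms with `j ≤ 1 / (2 x)` give `g x ≥ x ^ (α - 1) / 12` for
`x ≤ 1 / 2`, and `g` is symmetric about `1 / 2`, so the Riemann sums are dominated by a multiple of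
`min x (1 - x) ^ (-(α - 1) q)`, which is integrable when `(α - 1) q < 1`. For `q = 2` this is the
condition `α < 3 / 2`. The limit of the fidelity is therefore `(∫ g⁻¹) ^ 2 / ∫ g ^ (-2)`.
-/

open Filter Topology MeasureTheory

section RiemannSums

variable {E : Type*} [NormedAddCommGroup E] [NormedSpace ℝ E] [CompleteSpace E]

theorem integral_comp_natFloor (f : ℕ → E) (n : ℕ) :
    ∫ t in (0 : ℝ)..n, f ⌊t⌋₊ = ∑ k ∈ Finset.range n, f k := by
  have floor_eqOn (k : ℕ) :
      Set.EqOn (fun _ : ℝ => f k) (fun t => f ⌊t⌋₊) (Set.uIoo (k : ℝ) (k + 1 : ℕ)) := by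
    intro t ht
    rw [Set.uIoo_of_le (by simp), Nat.cast_succ] at ht
    exact congrArg f (Nat.floor_eq_on_Ico k t (Set.Ioo_subset_Ico_self ht)).symm
  rw [← Nat.cast_zero, ← intervalIntegral.sum_integral_adjacent_intervals
    fun k _ => intervalIntegrable_const.congr_uIoo (floor_eqOn k)]
  refine Finset.sum_congr rfl fun k _ => ?_
  rw [← intervalIntegral.integral_congr_uIoo (floor_eqOn k)]
  simp

theorem integral_comp_natFloor_mul (f : ℕ → E) {n : ℕ} (hn : n ≠ 0) :
    ∫ x in (0 : ℝ)..1, f ⌊(n : ℝ) * x⌋₊ = (n : ℝ)⁻¹ • ∑ k ∈ Finset.range n, f k := by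
  rw [intervalIntegral.integral_comp_mul_left (fun t => f ⌊t⌋₊) (Nat.cast_ne_zero.2 hn), mul_zero,
    mul_one, integral_comp_natFloor]

theorem tendsto_average_of_dominated_convergence {f : ℕ → ℕ → E} {F : ℝ → E} {bound : ℝ → ℝ}
    (h_bound : ∀ᶠ n in atTop, ∀ x ∈ Set.Ioo (0 : ℝ) 1, ‖f n ⌊(n : ℝ) * x⌋₊‖ ≤ bound x)
    (h_integrable : IntervalIntegrable bound volume 0 1)
    (h_lim : ∀ x ∈ Set.Ioo (0 : ℝ) 1, Tendsto (fun n => f n ⌊(n : ℝ) * x⌋₊) atTop (𝓝 (F x))) :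
    Tendsto (fun n : ℕ => (n : ℝ)⁻¹ • ∑ k ∈ Finset.range n, f n k) atTop
      (𝓝 (∫ x in (0 : ℝ)..1, F x)) := by
  have mem_Ioo : ∀ᵐ x : ℝ, x ∈ Set.uIoc (0 : ℝ) 1 → x ∈ Set.Ioo (0 : ℝ) 1 := by
    filter_upwards [Measure.ae_ne volume (1 : ℝ)] with x hx_ne hx
    rw [Set.uIoc_of_le zero_le_one] at hx
    exact ⟨hx.1, hx.2.lt_of_ne hx_ne⟩
  have h_integral : Tendsto (fun n : ℕ => ∫ x in (0 : ℝ)..1, f n ⌊(n : ℝ) * x⌋₊) atTop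
      (𝓝 (∫ x in (0 : ℝ)..1, F x)) := by
    refine intervalIntegral.tendsto_integral_filter_of_dominated_convergence bound
      (.of_forall fun n => ?_) (h_bound.mono fun n hn => ?_) h_integrable ?_
    · exact ((StronglyMeasurable.of_discrete (f := f n)).comp_measurable
        (Nat.measurable_floor.comp (measurable_const_mul _))).aestronglyMeasurable
    · exact mem_Ioo.mono fun x hx hx_mem => hn x (hx hx_mem)
    · exact mem_Ioo.mono fun x hx hx_mem => h_lim x (hx hx_mem)
  refine h_integral.congr' ?_
  filter_upwards [eventually_ne_atTop 0] with n hn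
  exact integral_comp_natFloor_mul (f n) hn

theorem intervalIntegrable_min_one_sub_rpow {r : ℝ} (hr : -1 < r) :
    IntervalIntegrable (fun x : ℝ => min x (1 - x) ^ r) volume 0 1 := by
  have left : IntervalIntegrable (fun x : ℝ => min x (1 - x) ^ r) volume 0 (1 / 2) := by
    refine (intervalIntegral.intervalIntegrable_rpow' hr).congr_uIoo fun x hx => ?_
    rw [Set.uIoo_of_le (by norm_num)] at hx
    rw [min_eq_left (by linarith [hx.2])]
  have right : IntervalIntegrable (fun x : ℝ => min x (1 - x) ^ r) volume 1 (1 / 2) := by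
    simpa only [sub_zero, sub_sub_cancel, sub_half, min_comm] using left.comp_sub_left 1
  exact left.trans right.symm

theorem half_min_one_sub_le_natFloor_mul_div {n : ℕ} {x : ℝ} (hx : x ∈ Set.Ioo (0 : ℝ) 1)
    (hfloor : ⌊(n : ℝ) * x⌋₊ ≠ 0) :
    min x (1 - x) / 2 ≤ min ((⌊(n : ℝ) * x⌋₊ : ℝ) / n) (1 - (⌊(n : ℝ) * x⌋₊ : ℝ) / n) := by
  have hnx : 0 ≤ (n : ℝ) * x := mul_nonneg n.cast_nonneg hx.1.le
  have floor_le : (⌊(n : ℝ) * x⌋₊ : ℝ) ≤ n * x := Nat.floor_le hnx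
  have lt_floor : (n : ℝ) * x < ⌊(n : ℝ) * x⌋₊ + 1 := Nat.lt_floor_add_one _
  have one_le_floor : (1 : ℝ) ≤ ⌊(n : ℝ) * x⌋₊ :=
    Nat.one_le_cast.2 (Nat.one_le_iff_ne_zero.2 hfloor)
  have hn : (0 : ℝ) < n := pos_of_mul_pos_left (by linarith) hx.1.le
  refine le_min ?_ ?_
  · have : x / 2 ≤ (⌊(n : ℝ) * x⌋₊ : ℝ) / n := by
      rw [le_div_iff₀ hn]; linarith
    linarith [min_le_left x (1 - x)]
  · have : (⌊(n : ℝ) * x⌋₊ : ℝ) / n ≤ x := by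
      rw [div_le_iff₀ hn]; linarith
    linarith [min_le_right x (1 - x), hx.2]

theorem tendsto_natFloor_natCast_mul_div {x : ℝ} (hx : 0 ≤ x) :
    Tendsto (fun n : ℕ => (⌊(n : ℝ) * x⌋₊ : ℝ) / n) atTop (𝓝 x) := by
  simpa only [Function.comp_def, mul_comm] using
    (tendsto_nat_floor_mul_div_atTop hx).comp tendsto_natCast_atTop_atTop

end RiemannSums

section Inequalities

theorem min_one_sub_pos {x : ℝ} (hx : x ∈ Set.Ioo (0 : ℝ) 1) : 0 < min x (1 - x) :=
  lt_min hx.1 (sub_pos.2 hx.2)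

theorem cube_div_three_le_sum_Icc_sq (J : ℕ) :
    (J : ℝ) ^ 3 / 3 ≤ ∑ j ∈ Finset.Icc 1 J, (j : ℝ) ^ 2 := by
  induction J with
  | zero => simp
  | succ J ih =>
    rw [Finset.sum_Icc_succ_top (by omega)]
    push_cast
    nlinarith [J.cast_nonneg (α := ℝ)]

theorem eight_mul_sq_le_one_sub_cos {t : ℝ} (ht : |t| ≤ 1 / 2) :
    8 * t ^ 2 ≤ 1 - Real.cos (2 * Real.pi * t) := by
  have h_abs : |2 * Real.pi * t| ≤ Real.pi := by
    rw [abs_mul, abs_of_pos Real.two_pi_pos]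
    nlinarith [Real.pi_pos]
  have h_sq : 2 / Real.pi ^ 2 * (2 * Real.pi * t) ^ 2 = 8 * t ^ 2 := by
    field_simp
    ring
  linarith [Real.cos_le_one_sub_mul_cos_sq h_abs]

theorem inv_pow_le_of_rpow_div_le {m c g β : ℝ} (hm : 0 < m) (hc : 0 < c) (h : m ^ β / c ≤ g)
    (q : ℕ) : (g ^ q)⁻¹ ≤ c ^ q * m ^ (-(β * q)) := by
  calc (g ^ q)⁻¹ ≤ ((m ^ β / c) ^ q)⁻¹ := by gcongr
    _ = c ^ q * m ^ (-(β * q)) := by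
      rw [div_pow, inv_div, ← Real.rpow_mul_natCast hm.le, Real.rpow_neg hm.le, div_eq_mul_inv]

end Inequalities

/-- The contribution `j ^ (-α) (1 - cos (2 π x j))` of the couplings at distance `j` to the energy
gap at momentum `2 π x`. It vanishes at `j = 0`. -/
noncomputable def gapTerm (α x : ℝ) (j : ℕ) : ℝ :=
  (j : ℝ) ^ (-α) * (1 - Real.cos (2 * Real.pi * x * j))

/-- The energy gap at momentum `2 π x` when only couplings at distance at most `N` are kept. The
gaps `λ_0 - λ_k` are its values at `N = n - 1` and `x = k / n`. -/
noncomputable def truncGap (α : ℝ) (N : ℕ) (x : ℝ) : ℝ :=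
  2 * ∑ j ∈ Finset.Icc 1 N, gapTerm α x j

/-- The limiting energy gap at momentum `2 π x` of the infinite chain. -/
noncomputable def gap (α x : ℝ) : ℝ :=
  2 * ∑' j, gapTerm α x j

/-- The average of `(λ_0 - λ_k)^{-q}` over the chain of length `n`, which is `S_q` without the
normalisation of the eigenvalues. -/
noncomputable def gapMoment (q : ℕ) (α : ℝ) (n : ℕ) : ℝ :=
  1 / (n : ℝ) * ∑ k ∈ Finset.Icc 1 (n - 1), (truncGap α (n - 1) ((k : ℝ) / n) ^ q)⁻¹

section Gap

variable {α x : ℝ}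

theorem gapTerm_zero (α x : ℝ) : gapTerm α x 0 = 0 := by
  simp [gapTerm]

theorem gapTerm_nonneg (α x : ℝ) (j : ℕ) : 0 ≤ gapTerm α x j :=
  mul_nonneg (by positivity) (sub_nonneg.2 (Real.cos_le_one _))

theorem norm_gapTerm_le (α x : ℝ) (j : ℕ) : ‖gapTerm α x j‖ ≤ (j : ℝ) ^ (-α) * 2 := by
  rw [Real.norm_of_nonneg (gapTerm_nonneg α x j), gapTerm]
  gcongr
  linarith [Real.neg_one_le_cos (2 * Real.pi * x * j)]

theorem gapTerm_one_sub (α x : ℝ) (j : ℕ) : gapTerm α (1 - x) j = gapTerm α x j := by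
  have angle : 2 * Real.pi * (1 - x) * j = j * (2 * Real.pi) - 2 * Real.pi * x * j := by ring
  rw [gapTerm, gapTerm, angle, Real.cos_nat_mul_two_pi_sub]

theorem continuous_gapTerm (α : ℝ) (j : ℕ) : Continuous fun x => gapTerm α x j := by
  unfold gapTerm
  fun_prop

theorem summable_gapTerm_bound (hα : 1 < α) : Summable fun j : ℕ => (j : ℝ) ^ (-α) * 2 :=
  (Real.summable_nat_rpow.2 (neg_lt_neg hα)).mul_right 2

theorem truncGap_one_sub (α : ℝ) (N : ℕ) (x : ℝ) : truncGap α N (1 - x) = truncGap α N x := by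
  simp only [truncGap, gapTerm_one_sub]

theorem truncGap_zero_right (α : ℝ) (N : ℕ) : truncGap α N 0 = 0 := by
  simp [truncGap, gapTerm]

theorem continuous_gap (hα : 1 < α) : Continuous (gap α) :=
  continuous_const.mul <| continuous_tsum (continuous_gapTerm α) (summable_gapTerm_bound hα)
    fun j x => norm_gapTerm_le α x j

theorem tendsto_truncGap (hα : 1 < α) {ι : Type*} {l : Filter ι} {N : ι → ℕ} {y : ι → ℝ}
    (hN : Tendsto N l atTop) (hy : Tendsto y l (𝓝 x)) :
    Tendsto (fun i => truncGap α (N i) (y i)) l (𝓝 (gap α x)) := by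
  unfold truncGap gap
  refine Tendsto.const_mul 2 ?_
  simp only [fun i => sum_eq_tsum_indicator (gapTerm α (y i)) (Finset.Icc 1 (N i))]
  refine tendsto_tsum_of_dominated_convergence (summable_gapTerm_bound hα) (fun j => ?_)
    (.of_forall fun i j => ?_)
  · refine (((continuous_gapTerm α j).tendsto x).comp hy).congr' ?_
    filter_upwards [hN.eventually_ge_atTop j] with i hi
    rcases j.eq_zero_or_pos with rfl | hj
    · simp [gapTerm_zero]
    · rw [Set.indicator_of_mem (by simpa using ⟨hj, hi⟩), Function.comp_apply]
  · exact (norm_indicator_le_norm_self _ _).trans (norm_gapTerm_le α (y i) j)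

theorem rpow_mul_sq_le_gapTerm (hα : 0 ≤ α) (hx : 0 < x) {j : ℕ} (hj : 0 < j)
    (hxj : x * j ≤ 1 / 2) : x ^ α * (8 * (x * j) ^ 2) ≤ gapTerm α x j := by
  have hj' : (0 : ℝ) < j := Nat.cast_pos.2 hj
  have h_rpow : x ^ α ≤ (j : ℝ) ^ (-α) := by
    rw [Real.rpow_neg hj'.le, ← Real.inv_rpow hj'.le]
    gcongr
    rw [← one_div, le_div_iff₀ hj']
    linarith
  have h_cos : 8 * (x * j) ^ 2 ≤ 1 - Real.cos (2 * Real.pi * x * j) := by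
    rw [mul_assoc _ x]
    exact eight_mul_sq_le_one_sub_cos (by rwa [abs_of_pos (by positivity)])
  exact mul_le_mul h_rpow h_cos (by positivity) (by positivity)

theorem rpow_div_le_truncGap_of_le_half (hα : 0 ≤ α) {N : ℕ} (hx : 0 < x) (hx_half : x ≤ 1 / 2)
    (hN : 1 ≤ 2 * N * x) : x ^ (α - 1) / 12 ≤ truncGap α N x := by
  set J := ⌊1 / (2 * x)⌋₊
  have J_le : (J : ℝ) ≤ 1 / (2 * x) := Nat.floor_le (by positivity)
  have le_J : 1 / (4 * x) ≤ J := by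
    have one_le : 1 ≤ 1 / (2 * x) := by
      rw [le_div_iff₀ (by positivity)]
      linarith
    calc 1 / (4 * x) = 1 / (2 * x) / 2 := by ring
      _ ≤ J := (Nat.div_two_lt_floor one_le).le
  have J_le_N : J ≤ N := by
    refine Nat.cast_le.1 (J_le.trans ?_)
    rw [div_le_iff₀ (by positivity)]
    linarith
  have term_le (j : ℕ) (hj : j ∈ Finset.Icc 1 J) : x ^ α * (8 * (x * j) ^ 2) ≤ gapTerm α x j := by
    obtain ⟨one_le_j, j_le⟩ := Finset.mem_Icc.1 hj
    refine rpow_mul_sq_le_gapTerm hα hx one_le_j ?_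
    have := (Nat.cast_le.2 j_le).trans J_le
    rw [le_div_iff₀ (by positivity)] at this
    linarith
  have cube_le : (1 / (4 * x)) ^ 3 / 3 ≤ ∑ j ∈ Finset.Icc 1 J, (j : ℝ) ^ 2 :=
    le_trans (by gcongr) (cube_div_three_le_sum_Icc_sq J)
  calc x ^ (α - 1) / 12 = 2 * (8 * x ^ α * x ^ 2 * ((1 / (4 * x)) ^ 3 / 3)) := by
        rw [Real.rpow_sub_one hx.ne']; field_simp; norm_num
    _ ≤ 2 * (8 * x ^ α * x ^ 2 * ∑ j ∈ Finset.Icc 1 J, (j : ℝ) ^ 2) := by gcongr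
    _ = 2 * ∑ j ∈ Finset.Icc 1 J, x ^ α * (8 * (x * j) ^ 2) := by
        rw [Finset.mul_sum]; congr! 2; ring
    _ ≤ 2 * ∑ j ∈ Finset.Icc 1 J, gapTerm α x j := by gcongr with j hj; exact term_le j hj
    _ ≤ truncGap α N x := by
        unfold truncGap
        gcongr
        exact fun j _ _ => gapTerm_nonneg α x j

theorem rpow_div_le_truncGap (hα : 0 ≤ α) {N : ℕ} (hx : x ∈ Set.Ioo (0 : ℝ) 1)
    (hN : 1 ≤ 2 * N * min x (1 - x)) : min x (1 - x) ^ (α - 1) / 12 ≤ truncGap α N x := by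
  rcases le_total x (1 - x) with h | h
  · rw [min_eq_left h] at hN ⊢
    exact rpow_div_le_truncGap_of_le_half hα hx.1 (by linarith) hN
  · rw [min_eq_right h] at hN ⊢
    rw [← truncGap_one_sub]
    exact rpow_div_le_truncGap_of_le_half hα (sub_pos.2 hx.2) (by linarith) hN

theorem rpow_div_le_gap (hα : 1 < α) (hx : x ∈ Set.Ioo (0 : ℝ) 1) :
    min x (1 - x) ^ (α - 1) / 12 ≤ gap α x := by
  have hN : Tendsto (fun N : ℕ => 2 * (N : ℝ) * min x (1 - x)) atTop atTop :=
    (tendsto_natCast_atTop_atTop.const_mul_atTop two_pos).atTop_mul_const (min_one_sub_pos hx)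
  refine ge_of_tendsto (tendsto_truncGap hα tendsto_id tendsto_const_nhds) ?_
  filter_upwards [hN.eventually_ge_atTop 1] with N
  exact rpow_div_le_truncGap (by linarith) hx

theorem gap_pos (hα : 1 < α) (hx : x ∈ Set.Ioo (0 : ℝ) 1) : 0 < gap α x :=
  lt_of_lt_of_le (div_pos (Real.rpow_pos_of_pos (min_one_sub_pos hx) _) (by norm_num))
    (rpow_div_le_gap hα hx)

end Gap

section Lattice

variable {α : ℝ} {n k : ℕ}

theorem natCast_div_mem_Ioo (hk : 0 < k) (hkn : k < n) : (k : ℝ) / n ∈ Set.Ioo (0 : ℝ) 1 := by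
  have hn : (0 : ℝ) < n := Nat.cast_pos.2 (hk.trans hkn)
  exact ⟨div_pos (Nat.cast_pos.2 hk) hn, (div_lt_one hn).2 (Nat.cast_lt.2 hkn)⟩

theorem rpow_div_le_truncGap_natCast_div (hα : 0 ≤ α) (hk : 0 < k) (hkn : k < n) :
    min ((k : ℝ) / n) (1 - (k : ℝ) / n) ^ (α - 1) / 12 ≤ truncGap α (n - 1) ((k : ℝ) / n) := by
  have hk' : (1 : ℝ) ≤ k := Nat.one_le_cast.2 hk
  have hkn' : (k : ℝ) + 1 ≤ n := by exact_mod_cast hkn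
  have hn : (0 : ℝ) < n := by linarith
  have inv_le_min : 1 / (n : ℝ) ≤ min ((k : ℝ) / n) (1 - (k : ℝ) / n) := by
    refine le_min (by gcongr) ?_
    rw [le_sub_iff_add_le, ← add_div, div_le_one hn]
    linarith
  refine rpow_div_le_truncGap hα (natCast_div_mem_Ioo hk hkn) ?_
  calc (1 : ℝ) ≤ 2 * ((n - 1 : ℕ) : ℝ) * (1 / n) := by
        rw [Nat.cast_pred (hk.trans hkn), mul_one_div, le_div_iff₀ hn]
        linarith
    _ ≤ _ := by gcongr

theorem truncGap_natCast_div_pos (hα : 0 ≤ α) (hk : 0 < k) (hkn : k < n) :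
    0 < truncGap α (n - 1) ((k : ℝ) / n) :=
  lt_of_lt_of_le
    (div_pos (Real.rpow_pos_of_pos (min_one_sub_pos (natCast_div_mem_Ioo hk hkn)) _) (by norm_num))
    (rpow_div_le_truncGap_natCast_div hα hk hkn)

theorem rpow_div_le_truncGap_natFloor_mul_div (hα : 1 ≤ α) {x : ℝ} (hx : x ∈ Set.Ioo (0 : ℝ) 1)
    (hfloor : ⌊(n : ℝ) * x⌋₊ ≠ 0) :
    min x (1 - x) ^ (α - 1) / (12 * 2 ^ (α - 1)) ≤
      truncGap α (n - 1) ((⌊(n : ℝ) * x⌋₊ : ℝ) / n) := by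
  have hmin := min_one_sub_pos hx
  have floor_lt : ⌊(n : ℝ) * x⌋₊ < n := by
    have hn : (0 : ℝ) < n := Nat.cast_pos.2 (Nat.pos_of_ne_zero (by rintro rfl; simp at hfloor))
    rw [Nat.floor_lt (mul_nonneg hn.le hx.1.le)]
    exact mul_lt_of_lt_one_right hn hx.2
  calc min x (1 - x) ^ (α - 1) / (12 * 2 ^ (α - 1)) = (min x (1 - x) / 2) ^ (α - 1) / 12 := by
        rw [Real.div_rpow hmin.le two_pos.le, div_div, mul_comm]
    _ ≤ min ((⌊(n : ℝ) * x⌋₊ : ℝ) / n) (1 - (⌊(n : ℝ) * x⌋₊ : ℝ) / n) ^ (α - 1) / 12 := by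
        gcongr ?_ ^ _ / _
        exact half_min_one_sub_le_natFloor_mul_div hx hfloor
    _ ≤ _ := rpow_div_le_truncGap_natCast_div (by linarith) (Nat.pos_of_ne_zero hfloor) floor_lt

end Lattice

section Moments

variable {α : ℝ} {q : ℕ}

theorem gapMoment_eq_average_range (hq : q ≠ 0) (α : ℝ) (n : ℕ) :
    gapMoment q α n =
      (n : ℝ)⁻¹ • ∑ k ∈ Finset.range n, (truncGap α (n - 1) ((k : ℝ) / n) ^ q)⁻¹ := by
  rw [gapMoment, one_div, smul_eq_mul]
  rcases n.eq_zero_or_pos with rfl | hn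
  · simp
  · rw [Finset.range_eq_Ico, Finset.sum_eq_sum_Ico_succ_bot hn, Nat.cast_zero, zero_div,
      truncGap_zero_right, zero_pow hq, inv_zero, zero_add, zero_add,
      ← Finset.Ico_add_one_right_eq_Icc, Nat.sub_one_add_one hn.ne']

theorem tendsto_gapMoment (hα : 1 < α) (hq : q ≠ 0) (hαq : (α - 1) * q < 1) :
    Tendsto (gapMoment q α) atTop (𝓝 (∫ x in (0 : ℝ)..1, (gap α x ^ q)⁻¹)) := by
  simp only [funext (gapMoment_eq_average_range hq α)]
  refine tendsto_average_of_dominated_convergence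
    (bound := fun x => (12 * 2 ^ (α - 1)) ^ q * min x (1 - x) ^ (-((α - 1) * q)))
    (.of_forall fun n x hx => ?_) ?_ (fun x hx => ?_)
  · have hmin := min_one_sub_pos hx
    rcases eq_or_ne ⌊(n : ℝ) * x⌋₊ 0 with hfloor | hfloor
    · rw [hfloor, Nat.cast_zero, zero_div, truncGap_zero_right, zero_pow hq, inv_zero, norm_zero]
      positivity
    · have h_le := rpow_div_le_truncGap_natFloor_mul_div hα.le hx hfloor
      have h_nonneg := le_trans (by positivity) h_le
      rw [Real.norm_of_nonneg (by positivity)]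
      exact inv_pow_le_of_rpow_div_le hmin (by positivity) h_le q
  · exact (intervalIntegrable_min_one_sub_rpow (by linarith)).const_mul _
  · exact ((tendsto_truncGap hα (tendsto_sub_atTop_nat 1)
      (tendsto_natFloor_natCast_mul_div hx.1.le)).pow q).inv₀ (pow_ne_zero q (gap_pos hα hx).ne')

theorem intervalIntegrable_inv_gap_pow (hα : 1 < α) (hαq : (α - 1) * q < 1) :
    IntervalIntegrable (fun x => (gap α x ^ q)⁻¹) volume 0 1 := by
  refine ((intervalIntegrable_min_one_sub_rpow (r := -((α - 1) * q)) (by linarith)).const_mul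
    (12 ^ q)).mono_fun' ((continuous_gap hα).measurable.pow_const q).inv.aestronglyMeasurable ?_
  rw [Set.uIoc_of_le zero_le_one, ← restrict_Ioo_eq_restrict_Ioc]
  filter_upwards [ae_restrict_mem measurableSet_Ioo] with x hx
  have hgap := gap_pos hα hx
  rw [Real.norm_of_nonneg (by positivity)]
  exact inv_pow_le_of_rpow_div_le (min_one_sub_pos hx) (by norm_num) (rpow_div_le_gap hα hx) q

theorem integral_inv_gap_pow_pos (hα : 1 < α) (hαq : (α - 1) * q < 1) :
    0 < ∫ x in (0 : ℝ)..1, (gap α x ^ q)⁻¹ :=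
  intervalIntegral.intervalIntegral_pos_of_pos_on (intervalIntegrable_inv_gap_pow hα hαq)
    (fun _ hx => inv_pos.2 (pow_pos (gap_pos hα hx) q)) one_pos

end Moments

section Fidelity

variable {α : ℝ} {n : ℕ}

theorem lam_zero_sub_lam (α : ℝ) (n k : ℕ) :
    lam α n 0 - lam α n k = truncGap α (n - 1) ((k : ℝ) / n) := by
  rw [lam, lam, truncGap, ← mul_sub, ← Finset.sum_sub_distrib]
  congr! 2 with j
  have angle : 2 * Real.pi * (k : ℝ) * j / n = 2 * Real.pi * ((k : ℝ) / n) * j := by ring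
  rw [gapTerm, angle, Nat.cast_zero, mul_zero, zero_mul, zero_div, Real.cos_zero, mul_sub]

theorem lam_half_lt_lam_zero (hα : 0 ≤ α) (hn : 2 ≤ n) : lam α n (n / 2) < lam α n 0 := by
  rw [← sub_pos, lam_zero_sub_lam]
  exact truncGap_natCast_div_pos hα (by omega) (by omega)

theorem one_sub_lamT (h : lam α n 0 ≠ lam α n (n / 2)) (k : ℕ) :
    1 - lamT α n k = truncGap α (n - 1) ((k : ℝ) / n) / (lam α n 0 - lam α n (n / 2)) := by
  rw [← lam_zero_sub_lam, lamT, one_sub_div (sub_ne_zero.2 h), sub_sub_sub_cancel_right]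

theorem Sq_eq_pow_mul_gapMoment (h : lam α n 0 ≠ lam α n (n / 2)) (q : ℕ) :
    Sq q α n = (lam α n 0 - lam α n (n / 2)) ^ q * gapMoment q α n := by
  rw [Sq, gapMoment, mul_left_comm,
    Finset.mul_sum (a := (lam α n 0 - lam α n (n / 2)) ^ q)]
  congr! 2 with k
  rw [one_sub_lamT h, zpow_neg, zpow_natCast, div_pow, inv_div, div_eq_mul_inv]

theorem fidelity_eq_gapMoment (hα : 0 ≤ α) (hn : 2 ≤ n) :
    Sq 1 α n ^ 2 / Sq 2 α n = gapMoment 1 α n ^ 2 / gapMoment 2 α n := by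
  have h := (lam_half_lt_lam_zero hα hn).ne'
  rw [Sq_eq_pow_mul_gapMoment h, Sq_eq_pow_mul_gapMoment h, pow_one, mul_pow,
    mul_div_mul_left _ _ (pow_ne_zero 2 (sub_ne_zero.2 h))]

end Fidelity

/-- for `1 < α < 3/2`, the asymptotic fidelity
`F(α,n) = S_1(α,n)² / S_2(α,n)` converges along even `n → ∞` to a finite
strictly positive limit `F_∞(α) > 0`. -/
theorem stmt_17 (α : ℝ) (h1 : 1 < α) (h2 : α < 3 / 2) :
    ∃ Finf : ℝ, 0 < Finf ∧
      Filter.Tendsto (fun n : ℕ => (Sq 1 α (2 * n)) ^ 2 / Sq 2 α (2 * n))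
        Filter.atTop (nhds Finf) := by
  have hq1 : (α - 1) * (1 : ℕ) < 1 := by push_cast; linarith
  have hq2 : (α - 1) * (2 : ℕ) < 1 := by push_cast; linarith
  have moment1_pos := integral_inv_gap_pow_pos h1 hq1
  have moment2_pos := integral_inv_gap_pow_pos h1 hq2
  refine ⟨_, div_pos (pow_pos moment1_pos 2) moment2_pos, ?_⟩
  have tendsto_moments := ((tendsto_gapMoment h1 one_ne_zero hq1).pow 2).div
    (tendsto_gapMoment h1 two_ne_zero hq2) moment2_pos.ne'
  refine (tendsto_moments.comp (tendsto_id.const_mul_atTop' two_pos)).congr' ?_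
  filter_upwards [eventually_ge_atTop 1] with n hn
  exact (fidelity_eq_gapMoment (by linarith) (by simpa using Nat.mul_le_mul_left 2 hn)).symm
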